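/- arXiv:2409.16963 — 3 statements merged into one kernel-verified Lean document; each statement's English description precedes it below -/
import Mathlib

section
/- Let β(x) = e^{-x} (the SNE case). For every solution Y(t) of the gradient flow of the relative entropy there exists a constant C > For every solution Y(t) of the gradient flow there exists C > 0 (depending on n, s, the initial configuration Y(0) and the probabilities p_{ij}, but not on t) such that diam Y(t) ≤ C for all t ≥ 0. -/
open Filter Topology

/-- The normalizing constant `Z = Σ_{k ≠ ℓ} β(|y_k - y_ℓ|²)`. -/
noncomputable def pairZ {E : Type*} [NormedAddCommGroup E] (β : ℝ → ℝ) {n : ℕ}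
    (Y : Fin n → E) : ℝ :=
  ∑ k : Fin n, ∑ l : Fin n, if k ≠ l then β (‖Y k - Y l‖ ^ 2) else 0

/-- The low-dimensional similarity `q_{ij}(Y) = β(|y_i - y_j|²) / Z(Y)`. -/
noncomputable def qfun {E : Type*} [NormedAddCommGroup E] (β : ℝ → ℝ) {n : ℕ}
    (Y : Fin n → E) (i j : Fin n) : ℝ :=
  β (‖Y i - Y j‖ ^ 2) / pairZ β Y

/-- The derivative `(log β)'` on `[0, ∞)`. -/
noncomputable def lbd (β : ℝ → ℝ) : ℝ → ℝ :=
  fun x => derivWithin (fun y => Real.log (β y)) (Set.Ici 0) x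

/-- `Y : ℝ → Fin n → E` is a solution of the gradient flow of the relative entropy:
`dy_i/dt = 4 Σ_{j ≠ i} (p_{ij} - q_{ij}(Y)) (y_i - y_j) (log β)'(|y_i - y_j|²)` for `t ≥ 0`. -/
def IsGradFlow {E : Type*} [NormedAddCommGroup E] [NormedSpace ℝ E] (β : ℝ → ℝ) {n : ℕ}
    (p : Fin n → Fin n → ℝ) (Y : ℝ → Fin n → E) : Prop :=
  ∀ i : Fin n, ∀ t ∈ Set.Ici (0 : ℝ),
    HasDerivWithinAt (fun u => Y u i)
      (∑ j ∈ Finset.univ.filter (· ≠ i),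
        (4 * (p i j - qfun β (Y t) i j) * lbd β (‖Y t i - Y t j‖ ^ 2)) • (Y t i - Y t j))
      (Set.Ici 0) t

/-- The diameter of the configuration `Y`, i.e. `max_{i,j} |y_i - y_j|`. -/
noncomputable def diamY {E : Type*} [NormedAddCommGroup E] {n : ℕ} (Y : Fin n → E) : ℝ :=
  Metric.diam (Set.range Y)


lemma aux_lbd (x : ℝ) (hx : 0 ≤ x) : lbd (fun x => Real.exp (-x)) x = -1 := by
  unfold lbd
  simp only [Real.log_exp]
  have h : HasDerivWithinAt (fun y : ℝ => -y) (-1) (Set.Ici 0) x :=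
    (hasDerivAt_id x).neg.hasDerivWithinAt
  exact h.derivWithin (uniqueDiffOn_Ici 0 x hx)

/-- Geometric lemma: more than `s + 1` points in `ℝ^s` cannot be almost equilateral at a
large scale. -/
lemma aux_geom (s n : ℕ) (hn : s + 1 < n) (y : Fin n → EuclideanSpace ℝ (Fin s)) (M K : ℝ)
    (hK : 0 ≤ K)
    (h1 : ∀ i j, i ≠ j → M ≤ ‖y i - y j‖ ^ 2) (h2 : ∀ i j, i ≠ j → ‖y i - y j‖ ^ 2 ≤ M + K) :
    M ≤ n * K := by
  classical
  let L : (Fin n → ℝ) →ₗ[ℝ] (EuclideanSpace ℝ (Fin s) × ℝ) :=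
    (Fintype.linearCombination ℝ y).prod (Fintype.linearCombination ℝ (fun _ => (1 : ℝ)))
  have hker : LinearMap.ker L ≠ ⊥ := by
    apply LinearMap.ker_ne_bot_of_finrank_lt
    simpa using hn
  obtain ⟨w, hw, hw0⟩ := (Submodule.ne_bot_iff _).1 hker
  have hw' : (∑ i, w i • y i = 0) ∧ (∑ i, w i = 0) := by
    simpa [L, LinearMap.mem_ker, Fintype.linearCombination_apply] using hw
  obtain ⟨hwy, hws⟩ := hw'
  have hsq : 0 < ∑ i, w i ^ 2 := by
    obtain ⟨i, hi⟩ := Function.ne_iff.1 hw0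
    exact Finset.sum_pos' (fun i _ => sq_nonneg _) ⟨i, Finset.mem_univ _, by
      have : w i ≠ 0 := hi
      positivity⟩
  have hzero : ∑ i, ∑ j, w i * w j * ‖y i - y j‖ ^ 2 = 0 := by
    have e1 : ∀ i j, w i * w j * ‖y i - y j‖ ^ 2
        = w i * ‖y i‖ ^ 2 * w j - 2 * inner ℝ (w i • y i) (w j • y j)
          + w i * (w j * ‖y j‖ ^ 2) := by
      intro i j
      rw [norm_sub_sq_real, inner_smul_left, inner_smul_right]
      simp only [conj_trivial]
      ring
    simp_rw [e1, Finset.sum_add_distrib, Finset.sum_sub_distrib, ← Finset.mul_sum, ← inner_sum,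
      hwy, hws, ← Finset.sum_mul, hws]
    simp
  have hprod : ∑ i, ∑ j, w i * w j = 0 := by
    simp_rw [← Finset.mul_sum, hws]
    simp
  have hb : ∀ i j, M * (w i * w j) - w i * w j * ‖y i - y j‖ ^ 2
      ≥ (if i = j then M * w i ^ 2 else 0) - K * (|w i| * |w j|) := by
    intro i j
    by_cases hij : i = j
    · subst hij
      simp only [sub_self, norm_zero, if_true]
      have : 0 ≤ K * (|w i| * |w i|) := by positivity
      nlinarith
    · simp only [hij, if_false]
      have a1 := h1 i j hij
      have a2 := h2 i j hij
      have a3 : w i * w j * (‖y i - y j‖ ^ 2 - M) ≤ |w i * w j| * K := by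
        calc _ ≤ |w i * w j| * (‖y i - y j‖ ^ 2 - M) :=
              mul_le_mul_of_nonneg_right (le_abs_self _) (by linarith)
          _ ≤ _ := mul_le_mul_of_nonneg_left (by linarith) (abs_nonneg _)
      rw [abs_mul] at a3
      nlinarith
  have hsum := Finset.sum_le_sum fun i (_ : i ∈ Finset.univ) =>
    Finset.sum_le_sum fun j (_ : j ∈ Finset.univ) => hb i j
  simp only [Finset.sum_sub_distrib, ← Finset.mul_sum, hzero, Finset.sum_ite_eq,
    Finset.mem_univ, if_true, hws, mul_zero, Finset.sum_const_zero, ← Finset.sum_mul] at hsum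
  have hcs : (∑ i, |w i|) ^ 2 ≤ n * ∑ i, w i ^ 2 := by
    have := sq_sum_le_card_mul_sum_sq (s := (Finset.univ : Finset (Fin n))) (f := fun i => |w i|)
    simpa using this
  have : M * ∑ i, w i ^ 2 ≤ (n * K) * ∑ i, w i ^ 2 := by
    nlinarith [mul_le_mul_of_nonneg_left hcs hK]
  exact le_of_mul_le_mul_right this hsq

/-- The relative entropy up to a constant. -/
noncomputable def auxF {E : Type*} [NormedAddCommGroup E] {n : ℕ} (p : Fin n → Fin n → ℝ)
    (Y : Fin n → E) : ℝ :=
  (∑ i, ∑ j, p i j * ‖Y i - Y j‖ ^ 2) + Real.log (pairZ (fun x => Real.exp (-x)) Y)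

lemma aux_Z_ge {E : Type*} [NormedAddCommGroup E] {n : ℕ} (Y : Fin n → E) (k l : Fin n)
    (hkl : k ≠ l) : Real.exp (-‖Y k - Y l‖ ^ 2) ≤ pairZ (fun x => Real.exp (-x)) Y := by
  unfold pairZ
  have hnn : ∀ a b : Fin n, 0 ≤ (if a ≠ b then Real.exp (-‖Y a - Y b‖ ^ 2) else 0) := by
    intro a b; split_ifs <;> positivity
  refine le_trans ?_ (Finset.single_le_sum (f := fun k => ∑ l : Fin n,
    if k ≠ l then Real.exp (-‖Y k - Y l‖ ^ 2) else 0)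
    (fun a _ => Finset.sum_nonneg fun b _ => hnn a b) (Finset.mem_univ k))
  refine le_trans ?_ (Finset.single_le_sum (fun b _ => hnn k b) (Finset.mem_univ l))
  simp [hkl]

lemma aux_deriv {E : Type*} [NormedAddCommGroup E] [InnerProductSpace ℝ E] {n : ℕ} (hn : 1 < n)
    (p : Fin n → Fin n → ℝ) (hsymm : ∀ i j, p i j = p j i)
    (Y : ℝ → Fin n → E) (V : Fin n → E) (S : Set ℝ) (t : ℝ)
    (hV : ∀ i, V i = ∑ j, (-4 * (p i j - qfun (fun x => Real.exp (-x)) (Y t) i j)) •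
      (Y t i - Y t j))
    (hY : ∀ i, HasDerivWithinAt (fun u => Y u i) (V i) S t) :
    HasDerivWithinAt (fun u => auxF p (Y u)) (-∑ i, ‖V i‖ ^ 2) S t := by
  have hZ : 0 < pairZ (fun x => Real.exp (-x)) (Y t) :=
    lt_of_lt_of_le (Real.exp_pos _) (aux_Z_ge (Y t) ⟨0, by omega⟩ ⟨1, hn⟩ (by simp))
  have hd : ∀ i j, HasDerivWithinAt (fun u => ‖Y u i - Y u j‖ ^ 2)
      (2 * inner ℝ (Y t i - Y t j) (V i - V j)) S t := fun i j => ((hY i).sub (hY j)).norm_sq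
  have hP : HasDerivWithinAt (fun u => ∑ i, ∑ j, p i j * ‖Y u i - Y u j‖ ^ 2)
      (∑ i, ∑ j, p i j * (2 * inner ℝ (Y t i - Y t j) (V i - V j))) S t :=
    HasDerivWithinAt.fun_sum fun i _ => HasDerivWithinAt.fun_sum fun j _ =>
      (hd i j).const_mul (p i j)
  have hZd : HasDerivWithinAt (fun u => pairZ (fun x => Real.exp (-x)) (Y u))
      (∑ i, ∑ j, -(Real.exp (-‖Y t i - Y t j‖ ^ 2) *
        (2 * inner ℝ (Y t i - Y t j) (V i - V j)))) S t := by
    unfold pairZ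
    refine HasDerivWithinAt.fun_sum fun i _ => HasDerivWithinAt.fun_sum fun j _ => ?_
    by_cases hij : i = j
    · subst hij
      simpa using hasDerivWithinAt_const t S (0 : ℝ)
    · simp only [ne_eq, hij, not_false_eq_true, if_true]
      have := (hd i j).neg.exp
      simpa using this
  have h := hP.add (hZd.log hZ.ne')
  refine h.congr_deriv ?_
  have hq : ∀ i j, qfun (fun x => Real.exp (-x)) (Y t) i j
      = qfun (fun x => Real.exp (-x)) (Y t) j i := by
    intro i j; unfold qfun; rw [norm_sub_rev]
  set q := qfun (fun x => Real.exp (-x)) (Y t) with hqdef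
  have e1 : (∑ i, ∑ j, -(Real.exp (-‖Y t i - Y t j‖ ^ 2) *
        (2 * inner ℝ (Y t i - Y t j) (V i - V j)))) / pairZ (fun x => Real.exp (-x)) (Y t)
      = ∑ i, ∑ j, -(q i j * (2 * inner ℝ (Y t i - Y t j) (V i - V j))) := by
    simp_rw [Finset.sum_div]
    refine Finset.sum_congr rfl fun i _ => Finset.sum_congr rfl fun j _ => ?_
    simp only [hqdef, qfun]
    ring
  rw [e1, ← Finset.sum_add_distrib]
  simp_rw [← Finset.sum_add_distrib]
  have e2 : ∀ i j, p i j * (2 * inner ℝ (Y t i - Y t j) (V i - V j))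
      + -(q i j * (2 * inner ℝ (Y t i - Y t j) (V i - V j)))
      = 2 * ((p i j - q i j) * inner ℝ (Y t i - Y t j) (V i))
        + 2 * ((p j i - q j i) * inner ℝ (Y t j - Y t i) (V j)) := by
    intro i j
    rw [hsymm j i, hq j i, inner_sub_right, ← neg_sub (Y t i) (Y t j), inner_neg_left]
    ring
  simp_rw [e2, Finset.sum_add_distrib]
  rw [Finset.sum_comm (f := fun i j => 2 * ((p j i - q j i) * inner ℝ (Y t j - Y t i) (V j))),
    ← Finset.sum_add_distrib, ← Finset.sum_neg_distrib]
  refine Finset.sum_congr rfl fun i _ => ?_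
  have e3 : ‖V i‖ ^ 2 = ∑ j, -4 * ((p i j - q i j) * inner ℝ (Y t i - Y t j) (V i)) := by
    rw [← real_inner_self_eq_norm_sq]
    nth_rewrite 1 [hV i]
    rw [sum_inner]
    refine Finset.sum_congr rfl fun j _ => ?_
    rw [real_inner_smul_left]
    ring
  rw [e3, ← Finset.mul_sum, ← Finset.mul_sum]
  ring

theorem sne_diameter_upper_bound
    (s n : ℕ) (hs : 1 ≤ s) (hn : s + 1 < n)
    (p : Fin n → Fin n → ℝ)
    (hsymm : ∀ i j, p i j = p j i)
    (hppos : ∀ i j, i ≠ j → 0 < p i j)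
    (hpsum : (∑ i, ∑ j, if i ≠ j then p i j else (0 : ℝ)) = 1)
    (β : ℝ → ℝ) (hβ : β = fun x => Real.exp (-x))
    (Y : ℝ → Fin n → EuclideanSpace ℝ (Fin s))
    (hflow : IsGradFlow β p Y) :
    ∃ C : ℝ, 0 < C ∧ ∀ t : ℝ, 0 ≤ t → diamY (Y t) ≤ C := by
  subst hβ
  have hder : ∀ t ∈ Set.Ici (0 : ℝ), ∃ d : ℝ, d ≤ 0 ∧
      HasDerivWithinAt (fun u => auxF p (Y u)) d (Set.Ici 0) t := by
    intro t ht
    refine ⟨_, ?_, aux_deriv (by omega) p hsymm Y _ (Set.Ici 0) t (fun i => rfl) ?_⟩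
    · exact neg_nonpos.2 (Finset.sum_nonneg fun i _ => by positivity)
    · intro i
      refine (hflow i t ht).congr_deriv ?_
      rw [Finset.sum_filter]
      refine Finset.sum_congr rfl fun j _ => ?_
      rw [aux_lbd _ (by positivity)]
      split_ifs with hji
      · congr 1; ring
      · have : j = i := not_not.1 hji
        subst this
        simp
  have hanti : AntitoneOn (fun u => auxF p (Y u)) (Set.Ici 0) := by
    refine antitoneOn_of_deriv_nonpos (convex_Ici 0) ?_ ?_ ?_
    · intro t ht
      obtain ⟨d, _, hd⟩ := hder t ht
      exact hd.continuousWithinAt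
    · intro t ht
      obtain ⟨d, _, hd⟩ := hder t (interior_subset ht)
      exact (hd.mono interior_subset).differentiableWithinAt
    · intro t ht
      obtain ⟨d, hd0, hd⟩ := hder t (interior_subset ht)
      rw [(hd.hasDerivAt (mem_interior_iff_mem_nhds.1 ht)).deriv]
      exact hd0
  set F0 := auxF p (Y 0) with hF0
  set K : ℝ := ∑ i, ∑ j, |F0 / p i j| with hKdef
  have hK : 0 ≤ K := Finset.sum_nonneg fun i _ => Finset.sum_nonneg fun j _ => abs_nonneg _
  have hKij : ∀ i j, F0 / p i j ≤ K := by
    intro i j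
    refine (le_abs_self _).trans ?_
    refine le_trans ?_ (Finset.single_le_sum (f := fun i => ∑ j, |F0 / p i j|)
      (fun a _ => Finset.sum_nonneg fun b _ => abs_nonneg _) (Finset.mem_univ i))
    exact Finset.single_le_sum (f := fun j => |F0 / p i j|) (fun b _ => abs_nonneg _)
      (Finset.mem_univ j)
  refine ⟨Real.sqrt (n * K + K) + 1, by positivity, ?_⟩
  intro t ht
  have hFt : auxF p (Y t) ≤ F0 := hanti (Set.mem_Ici.2 le_rfl) ht ht
  set y := Y t with hy
  -- the closest pair
  obtain ⟨⟨k, l⟩, hkl, hmin⟩ := Finset.exists_min_image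
    (Finset.univ.filter fun a : Fin n × Fin n => a.1 ≠ a.2)
    (fun a => ‖y a.1 - y a.2‖ ^ 2)
    ⟨(⟨0, by omega⟩, ⟨1, by omega⟩), by simp⟩
  have hkl' : k ≠ l := by simpa using hkl
  set M := ‖y k - y l‖ ^ 2 with hM
  have hmin' : ∀ i j, i ≠ j → M ≤ ‖y i - y j‖ ^ 2 := fun i j hij =>
    hmin (i, j) (by simpa using hij)
  have hlog : -M ≤ Real.log (pairZ (fun x => Real.exp (-x)) y) :=
    (Real.le_log_iff_exp_le (lt_of_lt_of_le (Real.exp_pos _) (aux_Z_ge y k l hkl'))).2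
      (aux_Z_ge y k l hkl')
  have hnn : ∀ i j, 0 ≤ if i ≠ j then p i j * (‖y i - y j‖ ^ 2 - M) else 0 := by
    intro i j
    split_ifs with hij
    · exact mul_nonneg (hppos i j hij).le (sub_nonneg.2 (hmin' i j hij))
    · exact le_rfl
  have htot : ∑ i, ∑ j, (if i ≠ j then p i j * (‖y i - y j‖ ^ 2 - M) else 0)
      = (∑ i, ∑ j, p i j * ‖y i - y j‖ ^ 2) - M := by
    have : ∀ i j, (if i ≠ j then p i j * (‖y i - y j‖ ^ 2 - M) else 0)
        = p i j * ‖y i - y j‖ ^ 2 - (if i ≠ j then p i j else 0) * M := by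
      intro i j
      by_cases hij : i = j
      · subst hij; simp
      · simp [hij]; ring
    simp_rw [this, Finset.sum_sub_distrib, ← Finset.sum_mul, hpsum, one_mul]
  have hle : ∀ i j, i ≠ j → ‖y i - y j‖ ^ 2 ≤ M + K := by
    intro i j hij
    have h1 : p i j * (‖y i - y j‖ ^ 2 - M) ≤ F0 := by
      have a1 := Finset.single_le_sum (f := fun i => ∑ j,
        (if i ≠ j then p i j * (‖y i - y j‖ ^ 2 - M) else 0))
        (fun a _ => Finset.sum_nonneg fun b _ => hnn a b) (Finset.mem_univ i)
      have a2 := Finset.single_le_sum (f := fun j =>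
        (if i ≠ j then p i j * (‖y i - y j‖ ^ 2 - M) else 0))
        (fun b _ => hnn i b) (Finset.mem_univ j)
      rw [htot] at a1
      simp only [ne_eq, hij, not_false_eq_true, if_true] at a1 a2
      have : (∑ i, ∑ j, p i j * ‖y i - y j‖ ^ 2)
        + Real.log (pairZ (fun x => Real.exp (-x)) y) ≤ F0 := hFt
      linarith
    have h2 : ‖y i - y j‖ ^ 2 - M ≤ F0 / p i j := by
      rw [le_div_iff₀ (hppos i j hij)]
      linarith
    have := hKij i j
    linarith
  have hMle := aux_geom s n hn y M K hK hmin' hle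
  unfold diamY
  refine Metric.diam_le_of_forall_dist_le (by positivity) ?_
  rintro _ ⟨i, rfl⟩ _ ⟨j, rfl⟩
  by_cases hij : i = j
  · subst hij
    rw [dist_self]
    positivity
  · rw [dist_eq_norm]
    have : ‖y i - y j‖ ≤ Real.sqrt (n * K + K) :=
      Real.le_sqrt_of_sq_le (by linarith [hle i j hij])
    linarith
end

section
/- Assume (A1) and (A2). Let Y(t) be a solution of the gradient flow of the relative entropy, and suppose t_i → ∞ is a sequence of times with diam Y(t_i) → ∞. Then there exist a subsequence (t_{i_k}) and points y_1^∞, …, y_n^∞ in ℝ^s which are pairwise distinct, such that Y(t_{i_k}) / diam Y(t_{i_k}) converges to (y_1^∞, …, y_n^∞) as k → ∞. -/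
open Filter Topology

section Helpers

variable {E : Type*} [NormedAddCommGroup E] [InnerProductSpace ℝ E]

lemma aux_sum_zero {n : ℕ} (w : Fin n → Fin n → ℝ) (hw : ∀ i j, w i j = w j i)
    (y : Fin n → E) : ∑ i, ∑ j, w i j • (y i - y j) = 0 := by
  have h1 : ∑ i, ∑ j, w i j • (y i - y j) = - ∑ i, ∑ j, w i j • (y i - y j) := by
    conv_lhs => rw [Finset.sum_comm]
    rw [← Finset.sum_neg_distrib]
    refine Finset.sum_congr rfl fun i _ => ?_
    rw [← Finset.sum_neg_distrib]
    refine Finset.sum_congr rfl fun j _ => ?_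
    rw [hw j i, ← smul_neg, neg_sub]
  have h2 : (2 : ℝ) • ∑ i, ∑ j, w i j • (y i - y j) = 0 := by
    rw [two_smul]
    nth_rewrite 1 [h1]
    exact neg_add_cancel _
  exact (smul_eq_zero.1 h2).resolve_left two_ne_zero

lemma aux_sum_inner {n : ℕ} (w : Fin n → Fin n → ℝ) (hw : ∀ i j, w i j = w j i)
    (y v : Fin n → E) :
    ∑ i, ∑ j, w i j * (2 * inner ℝ (y i - y j) (v i - v j)) =
      4 * ∑ i, inner ℝ (∑ j, w i j • (y i - y j)) (v i) := by
  have h1 : ∑ i, inner ℝ (∑ j, w i j • (y i - y j)) (v i)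
      = ∑ i, ∑ j, w i j * inner ℝ (y i - y j) (v i) := by
    refine Finset.sum_congr rfl fun i _ => ?_
    rw [sum_inner]
    refine Finset.sum_congr rfl fun j _ => ?_
    rw [real_inner_smul_left]
  have h2 : ∑ i, ∑ j, w i j * inner ℝ (y i - y j) (v j)
      = - ∑ i, ∑ j, w i j * inner ℝ (y i - y j) (v i) := by
    conv_lhs => rw [Finset.sum_comm]
    rw [← Finset.sum_neg_distrib]
    refine Finset.sum_congr rfl fun i _ => ?_
    rw [← Finset.sum_neg_distrib]
    refine Finset.sum_congr rfl fun j _ => ?_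
    rw [hw j i, ← neg_sub (y i) (y j), inner_neg_left]
    ring
  have h3 : ∑ i, ∑ j, w i j * (2 * inner ℝ (y i - y j) (v i - v j))
      = 2 * (∑ i, ∑ j, w i j * inner ℝ (y i - y j) (v i)
        - ∑ i, ∑ j, w i j * inner ℝ (y i - y j) (v j)) := by
    rw [← Finset.sum_sub_distrib, Finset.mul_sum]
    refine Finset.sum_congr rfl fun i _ => ?_
    rw [← Finset.sum_sub_distrib, Finset.mul_sum]
    refine Finset.sum_congr rfl fun j _ => ?_
    rw [inner_sub_right]
    ring
  rw [h3, h2, h1]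
  ring

lemma aux_pairZ_ge (β : ℝ → ℝ) (hβpos : ∀ x, 0 ≤ x → 0 < β x) {n : ℕ} (y : Fin n → E)
    (a b : Fin n) (hab : a ≠ b) : β (‖y a - y b‖ ^ 2) ≤ pairZ β y := by
  unfold pairZ
  have hnn : ∀ k l, 0 ≤ (if k ≠ l then β (‖y k - y l‖ ^ 2) else 0) := by
    intro k l
    by_cases hkl : k = l
    · simp [hkl]
    · rw [if_pos hkl]
      exact (hβpos _ (by positivity)).le
  calc β (‖y a - y b‖ ^ 2) = (if a ≠ b then β (‖y a - y b‖ ^ 2) else 0) := by rw [if_pos hab]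
    _ ≤ ∑ l, if a ≠ l then β (‖y a - y l‖ ^ 2) else 0 :=
        Finset.single_le_sum (f := fun l => if a ≠ l then β (‖y a - y l‖ ^ 2) else 0)
          (fun l _ => hnn a l) (Finset.mem_univ b)
    _ ≤ _ := Finset.single_le_sum
          (f := fun k => ∑ l, if k ≠ l then β (‖y k - y l‖ ^ 2) else 0)
          (fun k _ => Finset.sum_nonneg fun l _ => hnn k l) (Finset.mem_univ a)

/-- the velocity coefficient -/
noncomputable def wcoef (β : ℝ → ℝ) {n : ℕ} (p : Fin n → Fin n → ℝ) (y : Fin n → E)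
    (i j : Fin n) : ℝ :=
  4 * (p i j - qfun β y i j) * lbd β (‖y i - y j‖ ^ 2)

lemma wcoef_symm (β : ℝ → ℝ) {n : ℕ} (p : Fin n → Fin n → ℝ)
    (hsymm : ∀ i j, p i j = p j i) (y : Fin n → E) (i j : Fin n) :
    wcoef β p y i j = wcoef β p y j i := by
  unfold wcoef qfun
  rw [hsymm i j, norm_sub_rev (y i) (y j)]

lemma flow_deriv {β : ℝ → ℝ} {n : ℕ} {p : Fin n → Fin n → ℝ} {Y : ℝ → Fin n → E}
    (h : IsGradFlow β p Y) (i : Fin n) (t : ℝ) (ht : 0 ≤ t) :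
    HasDerivWithinAt (fun u => Y u i) (∑ j, wcoef β p (Y t) i j • (Y t i - Y t j))
      (Set.Ici 0) t := by
  convert h i t ht using 1
  rw [Finset.sum_filter]
  refine Finset.sum_congr rfl fun j _ => ?_
  by_cases hj : j = i
  · simp [hj]
  · rw [if_pos hj]; rfl

lemma mass_const {β : ℝ → ℝ} {n : ℕ} {p : Fin n → Fin n → ℝ} {Y : ℝ → Fin n → E}
    (hsymm : ∀ i j, p i j = p j i)
    (h : IsGradFlow β p Y) (t : ℝ) (ht : 0 ≤ t) : ∑ i, Y t i = ∑ i, Y 0 i := by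
  have hd : ∀ u ∈ Set.Ici (0:ℝ), HasDerivWithinAt (fun u => ∑ i, Y u i) 0 (Set.Ici 0) u := by
    intro u hu
    have := HasDerivWithinAt.fun_sum (u := Finset.univ) (fun i _ => flow_deriv h i u hu)
    rwa [aux_sum_zero _ (wcoef_symm β p hsymm (Y u))] at this
  have := (convex_Ici (0:ℝ)).norm_image_sub_le_of_norm_hasDerivWithin_le (C := 0) hd
    (by simp) (Set.mem_Ici.2 le_rfl) (Set.mem_Ici.2 ht)
  simpa [sub_eq_zero] using this

/-- relative entropy up to a constant -/
noncomputable def ent (β : ℝ → ℝ) {n : ℕ} (p : Fin n → Fin n → ℝ) (y : Fin n → E) : ℝ :=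
  Real.log (pairZ β y)
    - ∑ i, ∑ j, (if i ≠ j then p i j else 0) * Real.log (β (‖y i - y j‖ ^ 2))

lemma ent_antitone {β : ℝ → ℝ} {n : ℕ} {p : Fin n → Fin n → ℝ} {Y : ℝ → Fin n → E}
    (hn : 1 < n)
    (hsymm : ∀ i j, p i j = p j i)
    (hβpos : ∀ x, 0 ≤ x → 0 < β x)
    (hβ : DifferentiableOn ℝ β (Set.Ici 0))
    (h : IsGradFlow β p Y) : AntitoneOn (fun t => ent β p (Y t)) (Set.Ici 0) := by
  have hd : ∀ t ∈ Set.Ici (0:ℝ), HasDerivWithinAt (fun t => ent β p (Y t))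
      (- ∑ i, ‖∑ j, wcoef β p (Y t) i j • (Y t i - Y t j)‖ ^ 2) (Set.Ici 0) t := by
    intro t ht
    set v : Fin n → E := fun i => ∑ j, wcoef β p (Y t) i j • (Y t i - Y t j) with hv
    set l : Fin n → Fin n → ℝ := fun i j => lbd β (‖Y t i - Y t j‖ ^ 2) with hl
    set x' : Fin n → Fin n → ℝ := fun i j => 2 * inner ℝ (Y t i - Y t j) (v i - v j) with hx'
    have hx : ∀ i j, HasDerivWithinAt (fun u => ‖Y u i - Y u j‖ ^ 2) (x' i j) (Set.Ici 0) t :=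
      fun i j => ((flow_deriv h i t ht).sub (flow_deriv h j t ht)).norm_sq
    have hβd : ∀ x, 0 ≤ x → HasDerivWithinAt β (derivWithin β (Set.Ici 0) x) (Set.Ici 0) x :=
      fun x hx => (hβ x hx).hasDerivWithinAt
    have hlbd : ∀ x, 0 ≤ x → lbd β x = derivWithin β (Set.Ici 0) x / β x := by
      intro x hx
      exact ((hβd x hx).log (hβpos x hx).ne').derivWithin (uniqueDiffOn_Ici 0 x hx)
    have hmaps : ∀ i j, Set.MapsTo (fun u => ‖Y u i - Y u j‖ ^ 2) (Set.Ici 0) (Set.Ici 0) :=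
      fun i j u _ => Set.mem_Ici.2 (by positivity)
    have hb : ∀ i j, HasDerivWithinAt (fun u => β (‖Y u i - Y u j‖ ^ 2))
        (β (‖Y t i - Y t j‖ ^ 2) * l i j * x' i j) (Set.Ici 0) t := by
      intro i j
      have h0 : 0 ≤ ‖Y t i - Y t j‖ ^ 2 := by positivity
      have := HasDerivWithinAt.comp t (hβd _ h0) (hx i j) (hmaps i j)
      refine HasDerivWithinAt.congr_deriv this (Eq.symm ?_)
      change β (‖Y t i - Y t j‖ ^ 2) * lbd β (‖Y t i - Y t j‖ ^ 2) * x' i j = _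
      rw [hlbd _ h0, mul_div_cancel₀ _ (hβpos _ h0).ne']
    have hlog : ∀ i j, HasDerivWithinAt (fun u => Real.log (β (‖Y u i - Y u j‖ ^ 2)))
        (l i j * x' i j) (Set.Ici 0) t := by
      intro i j
      have h0 : 0 < β (‖Y t i - Y t j‖ ^ 2) := hβpos _ (by positivity)
      convert (hb i j).log h0.ne' using 1
      field_simp
    have hZ : HasDerivWithinAt (fun u => pairZ β (Y u))
        (∑ i, ∑ j, β (‖Y t i - Y t j‖ ^ 2) * l i j * x' i j) (Set.Ici 0) t := by
      unfold pairZ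
      refine HasDerivWithinAt.fun_sum fun i _ => HasDerivWithinAt.fun_sum fun j _ => ?_
      by_cases hij : i = j
      · subst hij
        have : x' i i = 0 := by simp [hx']
        simp only [this, ne_eq, not_true_eq_false, if_false, mul_zero]
        exact hasDerivWithinAt_const _ _ _
      · simp only [ne_eq, hij, not_false_eq_true, if_true]
        exact hb i j
    have hZpos : 0 < pairZ β (Y t) := by
      have hne : (⟨0, by omega⟩ : Fin n) ≠ ⟨1, hn⟩ := by simp
      exact (hβpos _ (by positivity)).trans_le (aux_pairZ_ge β hβpos (Y t) _ _ hne)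
    have hS : HasDerivWithinAt (fun u => ∑ i, ∑ j, (if i ≠ j then p i j else 0)
        * Real.log (β (‖Y u i - Y u j‖ ^ 2)))
        (∑ i, ∑ j, (if i ≠ j then p i j else 0) * (l i j * x' i j)) (Set.Ici 0) t :=
      HasDerivWithinAt.fun_sum fun i _ => HasDerivWithinAt.fun_sum fun j _ =>
        (hlog i j).const_mul _
    have hfin := (hZ.log hZpos.ne').sub hS
    refine HasDerivWithinAt.congr_deriv hfin (Eq.symm ?_)
    have key := aux_sum_inner (wcoef β p (Y t)) (wcoef_symm β p hsymm (Y t)) (Y t) v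
    have k1 : ∑ i, inner ℝ (∑ j, wcoef β p (Y t) i j • (Y t i - Y t j)) (v i)
        = ∑ i, ‖v i‖ ^ 2 :=
      Finset.sum_congr rfl fun i _ => real_inner_self_eq_norm_sq (v i)
    rw [k1] at key
    have k2 : ∑ i, ∑ j, wcoef β p (Y t) i j * (2 * inner ℝ (Y t i - Y t j) (v i - v j))
        = 4 * (∑ i, ∑ j, (if i ≠ j then p i j else 0) * (l i j * x' i j)
          - (∑ i, ∑ j, β (‖Y t i - Y t j‖ ^ 2) * l i j * x' i j) / pairZ β (Y t)) := by
      rw [Finset.sum_div, ← Finset.sum_sub_distrib, Finset.mul_sum]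
      refine Finset.sum_congr rfl fun i _ => ?_
      rw [Finset.sum_div, ← Finset.sum_sub_distrib, Finset.mul_sum]
      refine Finset.sum_congr rfl fun j _ => ?_
      by_cases hij : i = j
      · subst hij
        have : x' i i = 0 := by simp [hx']
        simp [this]
      · rw [if_pos hij]
        simp only [wcoef, qfun, hl, hx']
        ring
    rw [k2] at key
    change - ∑ i, ‖v i‖ ^ 2 = _
    linarith
  refine antitoneOn_of_hasDerivWithinAt_nonpos (convex_Ici 0)
    (fun t ht => (hd t ht).continuousWithinAt)
    (fun t ht => (hd t (interior_subset ht)).mono interior_subset) (fun t _ => ?_)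
  have : 0 ≤ ∑ i, ‖∑ j, wcoef β p (Y t) i j • (Y t i - Y t j)‖ ^ 2 :=
    Finset.sum_nonneg fun i _ => by positivity
  linarith

lemma ratio_bound {β : ℝ → ℝ} {n : ℕ} {p : Fin n → Fin n → ℝ} (C : ℝ) (y : Fin n → E)
    (hppos : ∀ i j, i ≠ j → 0 < p i j)
    (hpsum : (∑ i, ∑ j, if i ≠ j then p i j else (0 : ℝ)) = 1)
    (hβpos : ∀ x, 0 ≤ x → 0 < β x)
    (hC : ent β p y ≤ C) (a b c d : Fin n) (hab : a ≠ b) (hcd : c ≠ d) :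
    Real.log (β (‖y a - y b‖ ^ 2)) - Real.log (β (‖y c - y d‖ ^ 2))
      ≤ ∑ i, ∑ j, |C| / |p i j| := by
  classical
  set L : Fin n × Fin n → ℝ := fun q => Real.log (β (‖y q.1 - y q.2‖ ^ 2)) with hL
  obtain ⟨⟨a', b'⟩, hm, hmax⟩ := Finset.exists_max_image
    (Finset.univ.filter fun q : Fin n × Fin n => q.1 ≠ q.2) L ⟨(a, b), by simpa using hab⟩
  have hm' : a' ≠ b' := by simpa using hm
  have hmax' : ∀ i j, i ≠ j → L (i, j) ≤ L (a', b') :=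
    fun i j hij => hmax (i, j) (by simpa using hij)
  have hZ : L (a', b') ≤ Real.log (pairZ β y) :=
    Real.log_le_log (hβpos _ (by positivity)) (aux_pairZ_ge β hβpos y a' b' hm')
  have hterm : ∀ i j, 0 ≤ (if i ≠ j then p i j else 0) * (L (a', b') - L (i, j)) := by
    intro i j
    by_cases hij : i = j
    · simp [hij]
    · rw [if_pos hij]
      exact mul_nonneg (hppos i j hij).le (sub_nonneg.2 (hmax' i j hij))
  have hsum : ∑ i, ∑ j, (if i ≠ j then p i j else 0) * (L (a', b') - L (i, j)) ≤ C := by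
    have : ∑ i, ∑ j, (if i ≠ j then p i j else 0) * (L (a', b') - L (i, j))
        = L (a', b') - ∑ i, ∑ j, (if i ≠ j then p i j else 0) * L (i, j) := by
      simp only [mul_sub, Finset.sum_sub_distrib]
      simp only [← Finset.sum_mul]
      rw [hpsum, one_mul]
    rw [this]
    unfold ent at hC
    linarith
  have hone : p c d * (L (a', b') - L (c, d)) ≤ C := by
    refine le_trans ?_ hsum
    calc p c d * (L (a', b') - L (c, d))
        = (if c ≠ d then p c d else 0) * (L (a', b') - L (c, d)) := by rw [if_pos hcd]
      _ ≤ ∑ j, (if c ≠ j then p c j else 0) * (L (a', b') - L (c, j)) :=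
          Finset.single_le_sum
            (f := fun j => (if c ≠ j then p c j else 0) * (L (a', b') - L (c, j)))
            (fun j _ => hterm c j) (Finset.mem_univ d)
      _ ≤ _ := Finset.single_le_sum
            (f := fun i => ∑ j, (if i ≠ j then p i j else 0) * (L (a', b') - L (i, j)))
            (fun i _ => Finset.sum_nonneg fun j _ => hterm i j) (Finset.mem_univ c)
  have hp := hppos c d hcd
  have h1 : L (a', b') - L (c, d) ≤ |C| / |p c d| := by
    rw [abs_of_pos hp, le_div_iff₀ hp, mul_comm]
    exact hone.trans (le_abs_self C)
  have h2 : |C| / |p c d| ≤ ∑ i, ∑ j, |C| / |p i j| :=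
    (Finset.single_le_sum (f := fun j => |C| / |p c j|) (fun j _ => by positivity)
      (Finset.mem_univ d)).trans
    (Finset.single_le_sum (f := fun i => ∑ j, |C| / |p i j|)
      (fun i _ => Finset.sum_nonneg fun j _ => by positivity) (Finset.mem_univ c))
  have h3 := hmax' a b hab
  simp only [hL] at h1 h3
  linarith

lemma dist_le_diamY {n : ℕ} (y : Fin n → E) (i j : Fin n) : ‖y i - y j‖ ≤ diamY y := by
  rw [← dist_eq_norm]
  exact Metric.dist_le_diam_of_mem (Set.finite_range y).isBounded ⟨i, rfl⟩ ⟨j, rfl⟩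

lemma exists_diamY {n : ℕ} (hn : 0 < n) (y : Fin n → E) : ∃ i j, diamY y = ‖y i - y j‖ := by
  have : Nonempty (Fin n) := ⟨⟨0, hn⟩⟩
  obtain ⟨⟨i, j⟩, h⟩ := Finite.exists_max fun q : Fin n × Fin n => ‖y q.1 - y q.2‖
  refine ⟨i, j, le_antisymm ?_ (dist_le_diamY y i j)⟩
  refine Metric.diam_le_of_forall_dist_le (norm_nonneg _) ?_
  rintro _ ⟨k, rfl⟩ _ ⟨l, rfl⟩
  rw [dist_eq_norm]
  exact h (k, l)

lemma convex_ratio {g : ℝ → ℝ} (hg : ConvexOn ℝ (Set.Ici 0) g) (hg0 : g 0 = 1) {x X K : ℝ}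
    (hx : 0 ≤ x) (hX : 0 < X) (hxX : x ≤ X) (hK : 0 < K) (hr : g X ≤ K * g x)
    (hbig : 2 * K ≤ g X) : X ≤ 2 * K * x := by
  have hgx : 2 ≤ g x := by
    by_contra hcon
    push Not at hcon
    nlinarith
  have hc := hg.2 (Set.mem_Ici.2 hX.le) (Set.mem_Ici.2 le_rfl)
    (div_nonneg hx hX.le) (sub_nonneg.2 ((div_le_one hX).2 hxX)) (by ring)
  simp only [smul_eq_mul, mul_zero, add_zero, hg0, mul_one, div_mul_cancel₀ x hX.ne'] at hc
  have hr0 : 0 ≤ x / X := div_nonneg hx hX.le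
  have h1 : g x / 2 ≤ x / X * K * g x := by
    have := mul_le_mul_of_nonneg_left hr hr0
    nlinarith
  have h2 : 1 / 2 ≤ x / X * K := by
    by_contra hcon
    push Not at hcon
    nlinarith
  have h3 : x / X * K = x * K / X := by ring
  rw [h3, le_div_iff₀ hX] at h2
  linarith

end Helpers

/-- **Theorem 1.4.** Under assumptions (A1) and (A2) on `γ = 1/β`, if `Y(t)` is a solution of
the gradient flow of the relative entropy and `diam Y(t_i) → ∞` along a sequence of times
`t_i → ∞`, then the rescaled configurations `Y(t_i)/diam Y(t_i)` subconverge to `n`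
pairwise distinct points in `ℝ^s`. -/
theorem rescaled_subconvergence
    (s n : ℕ) (hs : 1 ≤ s) (hn : s + 1 < n)
    (p : Fin n → Fin n → ℝ)
    (hsymm : ∀ i j, p i j = p j i)
    (hppos : ∀ i j, i ≠ j → 0 < p i j)
    (hpsum : (∑ i, ∑ j, if i ≠ j then p i j else (0 : ℝ)) = 1)
    (β : ℝ → ℝ)
    (hβpos : ∀ x, 0 ≤ x → 0 < β x)
    (hβsmooth : ContDiffOn ℝ (⊤ : ℕ∞) β (Set.Ici 0))
    (hβanti : AntitoneOn β (Set.Ici 0))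
    (hβbdd : ∃ M : ℝ, ∀ x, 0 ≤ x → |lbd β x| ≤ M)
    -- (A1): `γ = 1/β` is convex on `[0,∞)`, `γ(0) = 1`, `γ' ≥ 0`, and `γ(x) → ∞`.
    (hγconv : ConvexOn ℝ (Set.Ici 0) fun x => (β x)⁻¹)
    (hγ0 : (β 0)⁻¹ = 1)
    (hγder : ∀ x, 0 ≤ x → 0 ≤ derivWithin (fun y => (β y)⁻¹) (Set.Ici 0) x)
    (hγtop : Tendsto (fun x => (β x)⁻¹) atTop atTop)
    -- (A2): `sup_{x ≥ 0} (log γ)'(x) < ∞`.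
    (hA2 : ∃ M : ℝ, ∀ x, 0 ≤ x →
      derivWithin (fun y => Real.log ((β y)⁻¹)) (Set.Ici 0) x ≤ M)
    (Y : ℝ → Fin n → EuclideanSpace ℝ (Fin s))
    (hflow : IsGradFlow β p Y)
    (tseq : ℕ → ℝ) (htnn : ∀ k, 0 ≤ tseq k)
    (htseq : Tendsto tseq atTop atTop)
    (hdiam : Tendsto (fun k => diamY (Y (tseq k))) atTop atTop) :
    ∃ (φ : ℕ → ℕ) (ylim : Fin n → EuclideanSpace ℝ (Fin s)),
      StrictMono φ ∧ (∀ i j : Fin n, i ≠ j → ylim i ≠ ylim j) ∧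
      ∀ i : Fin n,
        Tendsto (fun k => (diamY (Y (tseq (φ k))))⁻¹ • Y (tseq (φ k)) i)
          atTop (𝓝 (ylim i)) := by
  have hn1 : 1 < n := by omega
  have hn0 : 0 < n := by omega
  have hanti := ent_antitone hn1 hsymm hβpos (hβsmooth.differentiableOn (by simp)) hflow
  set C := ent β p (Y 0) with hCdef
  set K := Real.exp (∑ i, ∑ j, |C| / |p i j|) with hKdef
  have hKpos : 0 < K := Real.exp_pos _
  have hratio : ∀ t, 0 ≤ t → ∀ a b c d : Fin n, a ≠ b → c ≠ d →
      (β (‖Y t c - Y t d‖ ^ 2))⁻¹ ≤ K * (β (‖Y t a - Y t b‖ ^ 2))⁻¹ := by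
    intro t ht a b c d hab hcd
    have h1 := ratio_bound C (Y t) hppos hpsum hβpos
      (hanti (Set.mem_Ici.2 le_rfl) (Set.mem_Ici.2 ht) ht) a b c d hab hcd
    have hA : 0 < β (‖Y t a - Y t b‖ ^ 2) := hβpos _ (by positivity)
    have hB : 0 < β (‖Y t c - Y t d‖ ^ 2) := hβpos _ (by positivity)
    have h2 := Real.exp_le_exp.2 h1
    rw [Real.exp_sub, Real.exp_log hA, Real.exp_log hB, ← hKdef, div_le_iff₀ hB] at h2
    rw [← div_eq_mul_inv, le_div_iff₀ hA, inv_mul_le_iff₀ hB]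
    linarith
  -- lower bound for the rescaled distances
  have hbig : ∀ᶠ k in atTop, 2 * K ≤ (β (diamY (Y (tseq k)) ^ 2))⁻¹ :=
    (hγtop.comp ((tendsto_pow_atTop two_ne_zero).comp hdiam)).eventually_ge_atTop _
  have hone : ∀ᶠ k in atTop, 1 ≤ diamY (Y (tseq k)) := hdiam.eventually_ge_atTop _
  have hlow : ∀ᶠ k in atTop, ∀ i j : Fin n, i ≠ j →
      (2 * K)⁻¹ ≤ ‖(diamY (Y (tseq k)))⁻¹ • Y (tseq k) i
        - (diamY (Y (tseq k)))⁻¹ • Y (tseq k) j‖ ^ 2 := by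
    filter_upwards [hbig, hone] with k hk1 hk2 i j hij
    obtain ⟨c, d, hcd⟩ := exists_diamY hn0 (Y (tseq k))
    have hDpos : 0 < diamY (Y (tseq k)) := by linarith
    have hne : c ≠ d := by
      rintro rfl
      simp at hcd
      linarith
    have hr := hratio (tseq k) (htnn k) i j c d hij hne
    rw [← hcd] at hr
    have hle := dist_le_diamY (Y (tseq k)) i j
    have hfin := convex_ratio hγconv hγ0 (x := ‖Y (tseq k) i - Y (tseq k) j‖ ^ 2)
      (X := diamY (Y (tseq k)) ^ 2) (K := K) (by positivity) (by positivity)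
      (by gcongr) hKpos hr hk1
    rw [← smul_sub, norm_smul, mul_pow, Real.norm_eq_abs, sq_abs, inv_pow, ← div_eq_inv_mul,
      le_div_iff₀ (by positivity), inv_mul_le_iff₀ (by positivity)]
    exact hfin
  -- boundedness
  set R : ℝ := 1 + ‖∑ i, Y 0 i‖ with hR
  have hbdd : ∀ᶠ k in atTop, (fun i => (diamY (Y (tseq k)))⁻¹ • Y (tseq k) i)
      ∈ Metric.closedBall (0 : Fin n → EuclideanSpace ℝ (Fin s)) R := by
    filter_upwards [hone] with k hk
    have hDpos : 0 < diamY (Y (tseq k)) := by linarith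
    rw [mem_closedBall_zero_iff, pi_norm_le_iff_of_nonneg (by positivity)]
    intro i
    rw [norm_smul, norm_inv, Real.norm_eq_abs, abs_of_pos hDpos, inv_mul_le_iff₀ hDpos]
    have hm := mass_const hsymm hflow (tseq k) (htnn k)
    have he : (n : ℝ) • Y (tseq k) i
        = ∑ j, (Y (tseq k) i - Y (tseq k) j) + ∑ j, Y 0 j := by
      rw [Finset.sum_sub_distrib, hm]
      simp [← Nat.cast_smul_eq_nsmul ℝ]
    have hnorm : (n : ℝ) * ‖Y (tseq k) i‖ ≤ n * diamY (Y (tseq k)) + ‖∑ j, Y 0 j‖ := by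
      calc (n : ℝ) * ‖Y (tseq k) i‖ = ‖(n : ℝ) • Y (tseq k) i‖ := by
            rw [norm_smul]; simp
        _ ≤ ‖∑ j, (Y (tseq k) i - Y (tseq k) j)‖ + ‖∑ j, Y 0 j‖ := by
            rw [he]; exact norm_add_le _ _
        _ ≤ _ := by
            gcongr
            refine (norm_sum_le_of_le _ fun j _ => dist_le_diamY (Y (tseq k)) i j).trans ?_
            simp
    have hn' : (1 : ℝ) ≤ n := by exact_mod_cast hn0
    have hS : 0 ≤ ‖∑ j, Y 0 j‖ := norm_nonneg _
    have h5 : (n : ℝ) * ‖Y (tseq k) i‖ ≤ n * (diamY (Y (tseq k)) * R) := by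
      rw [hR]
      nlinarith [mul_le_mul hn' hk zero_le_one (by linarith)]
    exact le_of_mul_le_mul_left h5 (by linarith)
  obtain ⟨ylim, -, φ, hφ, hlim⟩ :=
    (isCompact_closedBall (0 : Fin n → EuclideanSpace ℝ (Fin s)) R).tendsto_subseq'
      hbdd.frequently
  have hlim' : ∀ i, Tendsto (fun k => (diamY (Y (tseq (φ k))))⁻¹ • Y (tseq (φ k)) i)
      atTop (𝓝 (ylim i)) := fun i => (tendsto_pi_nhds.1 hlim) i
  refine ⟨φ, ylim, hφ, ?_, hlim'⟩
  intro i j hij heq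
  have h1 := (((hlim' i).sub (hlim' j)).norm).pow 2
  have h2 : (2 * K)⁻¹ ≤ ‖ylim i - ylim j‖ ^ 2 :=
    ge_of_tendsto h1 ((hφ.tendsto_atTop.eventually hlow).mono fun k hk => hk i j hij)
  have h3 : 0 < (2 * K)⁻¹ := by positivity
  rw [heq, sub_self, norm_zero] at h2
  have h4 : (0 : ℝ) ^ 2 = 0 := by norm_num
  linarith
end

section
/- Let β(x) = (1+x)^{-1} (the t-SNE case). Let Y(t) be a solution of the gradient flow of the relative entropy with Σ_{i=1}^n y_i(t) = 0 for all t, and set S(t) = Σ_{i=1}^n |y_i(t)|². Then there exist constants C' > 0 and C > 0 (independent of t) such that for every t ≥ 0 with S(t) ≥ C', one has dS/dt (t) ≤ C / S(t). -/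
open Filter Topology

lemma sum_symm_inner {E : Type*} [NormedAddCommGroup E] [InnerProductSpace ℝ E] {n : ℕ}
    (w : Fin n → Fin n → ℝ) (hw : ∀ i j, w i j = w j i) (y v : Fin n → E) :
    ∑ i, ∑ j, w i j * inner ℝ (y i - y j) (v i - v j)
      = 2 * ∑ i, inner ℝ (∑ j, w i j • (y i - y j)) (v i) := by
  have h1 : ∀ i, inner ℝ (∑ j, w i j • (y i - y j)) (v i)
      = ∑ j, w i j * inner ℝ (y i - y j) (v i) := by
    intro i
    rw [sum_inner]
    exact Finset.sum_congr rfl fun j _ => by rw [real_inner_smul_left]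
  have h2 : ∑ i, ∑ j, w i j * inner ℝ (y i - y j) (v j)
      = - ∑ i, ∑ j, w i j * inner ℝ (y i - y j) (v i) := by
    rw [Finset.sum_comm, ← Finset.sum_neg_distrib]
    refine Finset.sum_congr rfl fun i _ => ?_
    rw [← Finset.sum_neg_distrib]
    refine Finset.sum_congr rfl fun j _ => ?_
    rw [hw j i, ← neg_sub (y i) (y j), inner_neg_left]
    ring
  simp_rw [h1, inner_sub_right, mul_sub, Finset.sum_sub_distrib]
  rw [h2]; ring

lemma lbd_tsne (x : ℝ) (hx : 0 ≤ x) : lbd (fun x => (1 + x)⁻¹) x = -(1 + x)⁻¹ := by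
  unfold lbd
  have h1 : (1 + x) ≠ 0 := by positivity
  have h2 : HasDerivAt (fun y : ℝ => Real.log ((1 + y)⁻¹)) (-(1 + x)⁻¹) x := by
    simp_rw [Real.log_inv]
    have := (((hasDerivAt_id x).const_add 1).log h1).neg
    have h3 : -(1 / (1 + id x)) = -(1 + x)⁻¹ := by simp
    exact this.congr_deriv h3
  exact h2.hasDerivWithinAt.derivWithin (uniqueDiffOn_Ici 0 x hx)

lemma sum_dist_sq {E : Type*} [NormedAddCommGroup E] [InnerProductSpace ℝ E] {n : ℕ}
    (y : Fin n → E) (h0 : ∑ i, y i = 0) :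
    ∑ i, ∑ j, ‖y i - y j‖ ^ 2 = 2 * n * ∑ i, ‖y i‖ ^ 2 := by
  have h1 : ∑ i, ∑ j, inner ℝ (y i) (y j) = 0 := by
    simp_rw [← inner_sum, h0, inner_zero_right]; simp
  simp_rw [norm_sub_sq_real, Finset.sum_add_distrib, Finset.sum_sub_distrib, ← Finset.mul_sum]
  rw [h1]
  simp [← Finset.mul_sum]
  ring

/-- off-diagonal part -/
noncomputable def offd {n : ℕ} (f : Fin n → Fin n → ℝ) (i j : Fin n) : ℝ :=
  if i ≠ j then f i j else 0

set_option maxHeartbeats 2000000 in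
/-- **Section 3 (t-SNE case).** For `β(x) = (1+x)⁻¹` and a solution `Y(t)` of the gradient
flow with center of mass at the origin, setting `S(t) = Σ_i |y_i(t)|²`, there exist
constants `C', C > 0` such that whenever `S(t) ≥ C'` one has `dS/dt ≤ C / S(t)`. -/
theorem dSdt_bound_tsne
    (s n : ℕ) (hs : 1 ≤ s) (hn : s + 1 < n)
    (p : Fin n → Fin n → ℝ)
    (hsymm : ∀ i j, p i j = p j i)
    (hppos : ∀ i j, i ≠ j → 0 < p i j)
    (hpsum : (∑ i, ∑ j, if i ≠ j then p i j else (0 : ℝ)) = 1)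
    (β : ℝ → ℝ) (hβ : β = fun x => (1 + x)⁻¹)
    (Y : ℝ → Fin n → EuclideanSpace ℝ (Fin s))
    (hflow : IsGradFlow β p Y)
    (hcm : ∀ t : ℝ, 0 ≤ t → ∑ i, Y t i = 0) :
    ∃ C' C : ℝ, 0 < C' ∧ 0 < C ∧
      ∀ t : ℝ, 0 ≤ t → C' ≤ ∑ i, ‖Y t i‖ ^ 2 →
        derivWithin (fun u => ∑ i, ‖Y u i‖ ^ 2) (Set.Ici 0) t
          ≤ C / ∑ i, ‖Y t i‖ ^ 2 := by
  have hn0 : 0 < n := by omega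
  have hnR : (0 : ℝ) < n := by exact_mod_cast hn0
  subst hβ
  -- abbreviations
  set b : ℝ → Fin n → Fin n → ℝ := fun t i j => (1 + ‖Y t i - Y t j‖ ^ 2)⁻¹ with hb
  set Z : ℝ → ℝ := fun t => ∑ i, ∑ j, offd (b t) i j with hZ
  set w : ℝ → Fin n → Fin n → ℝ := fun t i j => offd (fun i j => (p i j - b t i j / Z t) * b t i j) i j with hw
  set P : Fin n → Fin n → ℝ := offd p with hP
  set V : ℝ → Fin n → EuclideanSpace ℝ (Fin s) := fun t i => ∑ j, w t i j • (Y t i - Y t j) with hV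
  have bpos : ∀ t i j, 0 < b t i j := fun t i j => by simp only [hb]; positivity
  have ble : ∀ t i j, b t i j ≤ 1 := fun t i j => by
    simp only [hb]; apply inv_le_one_of_one_le₀; nlinarith [sq_nonneg ‖Y t i - Y t j‖]
  have bsymm : ∀ t i j, b t i j = b t j i := fun t i j => by simp only [hb]; rw [norm_sub_rev]
  have obnn : ∀ t i j, 0 ≤ offd (b t) i j := fun t i j => by
    unfold offd; split_ifs
    · exact (bpos t i j).le
    · exact le_rfl
  have bZ : ∀ t i j, i ≠ j → b t i j ≤ Z t := fun t i j hij => by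
    have h1 : b t i j = offd (b t) i j := by simp [offd, hij]
    rw [h1]
    calc offd (b t) i j ≤ ∑ j, offd (b t) i j :=
          Finset.single_le_sum (f := fun j => offd (b t) i j) (fun j _ => obnn t i j) (Finset.mem_univ j)
      _ ≤ Z t := Finset.single_le_sum (f := fun i => ∑ j, offd (b t) i j)
          (fun i _ => Finset.sum_nonneg fun j _ => obnn t i j) (Finset.mem_univ i)
  have Zpos : ∀ t, 0 < Z t := fun t =>
    lt_of_lt_of_le (bpos t ⟨0, hn0⟩ ⟨1, by omega⟩) (bZ t _ _ (by simp [Fin.ext_iff]))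
  have Ppos : ∀ i j, i ≠ j → 0 < P i j := fun i j hij => by simp [hP, offd, hij, hppos i j hij]
  have Pnn : ∀ i j, 0 ≤ P i j := fun i j => by
    by_cases h : i = j
    · simp [hP, offd, h]
    · exact (Ppos i j h).le
  have Psum : ∑ i, ∑ j, P i j = 1 := hpsum
  have wsymm : ∀ t i j, w t i j = w t j i := fun t i j => by
    simp only [hw, offd, hsymm i j, bsymm t i j, ne_comm]
  -- the flow
  have hY : ∀ i t, 0 ≤ t → HasDerivWithinAt (fun u => Y u i) ((-4 : ℝ) • V t i) (Set.Ici 0) t := by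
    intro i t ht
    have h := hflow i t ht
    refine HasDerivWithinAt.congr_deriv h (Eq.symm ?_)
    simp only [hV]
    rw [Finset.smul_sum, Finset.sum_filter]
    refine Finset.sum_congr rfl fun j _ => ?_
    by_cases hij : j = i
    · simp [hij]
    · rw [if_pos hij, smul_smul]
      congr 1
      rw [lbd_tsne _ (by positivity)]
      have : i ≠ j := fun h => hij h.symm
      simp only [hw, offd, if_pos this]
      have hq : qfun (fun x : ℝ => (1 + x)⁻¹) (Y t) i j = b t i j / Z t := rfl
      rw [hq]
      simp only [hb]
      ring
  have hd : ∀ i j t, 0 ≤ t → HasDerivWithinAt (fun u => 1 + ‖Y u i - Y u j‖ ^ 2)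
      (-8 * inner ℝ (Y t i - Y t j) (V t i - V t j)) (Set.Ici 0) t := by
    intro i j t ht
    have h := (((hY i t ht).sub (hY j t ht)).norm_sq).const_add 1
    refine HasDerivWithinAt.congr_deriv h (Eq.symm ?_)
    rw [← smul_sub, real_inner_smul_right]
    simp only [Pi.sub_apply]
    ring
  -- derivative of S
  have hS : ∀ t, 0 ≤ t → HasDerivWithinAt (fun u => ∑ i, ‖Y u i‖ ^ 2)
      (-4 * ∑ i, ∑ j, w t i j * ‖Y t i - Y t j‖ ^ 2) (Set.Ici 0) t := by
    intro t ht
    have h := HasDerivWithinAt.fun_sum (u := Finset.univ) fun i _ => (hY i t ht).norm_sq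
    refine HasDerivWithinAt.congr_deriv h (Eq.symm ?_)
    have h2 := sum_symm_inner (w t) (wsymm t) (Y t) (Y t)
    simp_rw [real_inner_self_eq_norm_sq] at h2
    rw [h2, Finset.mul_sum, Finset.mul_sum]
    refine Finset.sum_congr rfl fun i _ => ?_
    rw [real_inner_smul_right, real_inner_comm]
    simp only [hV]
    ring
  -- derivative of Z
  have hZd : ∀ t, 0 ≤ t → HasDerivWithinAt Z
      (∑ i, ∑ j, offd (fun i j => 8 * b t i j ^ 2 * inner ℝ (Y t i - Y t j) (V t i - V t j)) i j)
      (Set.Ici 0) t := by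
    intro t ht
    refine HasDerivWithinAt.fun_sum fun i _ => HasDerivWithinAt.fun_sum fun j _ => ?_
    by_cases hij : i = j
    · simp only [offd, hij, ne_eq, not_true_eq_false, if_false]
      exact hasDerivWithinAt_const _ _ _
    · simp only [offd, ne_eq, hij, not_false_eq_true, if_true]
      have h := (hd i j t ht).fun_inv (by positivity)
      refine HasDerivWithinAt.congr_deriv h (Eq.symm ?_)
      simp only [hb]
      rw [div_eq_mul_inv, inv_pow]
      ring
  -- the entropy
  set H : ℝ → ℝ := fun t => ∑ i, ∑ j, P i j * Real.log (1 + ‖Y t i - Y t j‖ ^ 2) + Real.log (Z t) with hH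
  have hHd : ∀ t, 0 ≤ t → HasDerivWithinAt H (-16 * ∑ i, ‖V t i‖ ^ 2) (Set.Ici 0) t := by
    intro t ht
    have h := (HasDerivWithinAt.fun_sum (u := Finset.univ) fun i _ =>
      HasDerivWithinAt.fun_sum (u := Finset.univ) fun j _ =>
        ((hd i j t ht).log (by positivity)).const_mul (P i j)).add ((hZd t ht).log (Zpos t).ne')
    refine HasDerivWithinAt.congr_deriv h (Eq.symm ?_)
    have h2 := sum_symm_inner (w t) (wsymm t) (Y t) (V t)
    have h3 : ∑ i, inner ℝ (∑ j, w t i j • (Y t i - Y t j)) (V t i) = ∑ i, ‖V t i‖ ^ 2 :=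
      Finset.sum_congr rfl fun i _ => real_inner_self_eq_norm_sq _
    rw [h3] at h2
    have h4 : -16 * ∑ i, ‖V t i‖ ^ 2
      = -8 * ∑ i, ∑ j, w t i j * inner ℝ (Y t i - Y t j) (V t i - V t j) := by rw [h2]; ring
    rw [h4, Finset.mul_sum, Finset.sum_div, ← Finset.sum_add_distrib]
    refine Finset.sum_congr rfl fun i _ => ?_
    rw [Finset.mul_sum, Finset.sum_div, ← Finset.sum_add_distrib]
    refine Finset.sum_congr rfl fun j _ => ?_
    by_cases hij : i = j
    · simp [hw, hP, offd, hij]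
    · simp only [hw, hP, offd, ne_eq, hij, not_false_eq_true, if_true]
      rw [div_eq_mul_inv _ (1 + ‖Y t i - Y t j‖ ^ 2)]
      simp only [hb]
      ring
  have hanti : AntitoneOn H (Set.Ici 0) := by
    refine antitoneOn_of_deriv_nonpos (convex_Ici 0)
      (fun t ht => (hHd t ht).continuousWithinAt) ?_ ?_
    · intro t ht
      rw [interior_Ici] at ht
      exact ((hHd t (le_of_lt ht)).hasDerivAt (Ici_mem_nhds ht)).differentiableAt.differentiableWithinAt
    · intro t ht
      rw [interior_Ici] at ht
      rw [((hHd t (le_of_lt ht)).hasDerivAt (Ici_mem_nhds ht)).deriv]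
      have : 0 ≤ ∑ i, ‖V t i‖ ^ 2 := Finset.sum_nonneg fun i _ => by positivity
      linarith
  -- lower bound on similarities
  have key : ∀ t, 0 ≤ t → ∀ i j, i ≠ j →
      Z t * (1 + ‖Y t i - Y t j‖ ^ 2) ≤ Real.exp (H 0 / P i j) := by
    intro t ht i j hij
    set g : Fin n → Fin n → ℝ := fun i j => P i j * Real.log (Z t * (1 + ‖Y t i - Y t j‖ ^ 2)) with hg
    have gnn : ∀ i j, 0 ≤ g i j := by
      intro i j
      by_cases hij : i = j
      · simp [hg, hP, offd, hij]
      · refine mul_nonneg (Pnn i j) (Real.log_nonneg ?_)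
        have h1 := bZ t i j hij
        simp only [hb] at h1
        rwa [inv_le_iff_one_le_mul₀ (by positivity)] at h1
    have hsum : ∑ i, ∑ j, g i j = H t := by
      have : ∀ i j, g i j = P i j * Real.log (1 + ‖Y t i - Y t j‖ ^ 2) + P i j * Real.log (Z t) := by
        intro i j
        simp only [hg]
        rw [Real.log_mul (Zpos t).ne' (by positivity)]; ring
      simp_rw [this, Finset.sum_add_distrib, ← Finset.sum_mul]
      rw [Psum, one_mul]
    have h1 : g i j ≤ H 0 := by
      calc g i j ≤ ∑ j, g i j :=
            Finset.single_le_sum (f := fun j => g i j) (fun j _ => gnn i j) (Finset.mem_univ j)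
        _ ≤ ∑ i, ∑ j, g i j := Finset.single_le_sum (f := fun i => ∑ j, g i j)
            (fun i _ => Finset.sum_nonneg fun j _ => gnn i j) (Finset.mem_univ i)
        _ = H t := hsum
        _ ≤ H 0 := hanti (Set.mem_Ici.2 le_rfl) ht ht
    have hpos : 0 < Z t * (1 + ‖Y t i - Y t j‖ ^ 2) := mul_pos (Zpos t) (by positivity)
    rw [← Real.log_le_iff_le_exp hpos, le_div_iff₀ (Ppos i j hij), mul_comm]
    exact h1
  set M : ℝ := ∑ i, ∑ j, Real.exp (H 0 / P i j) with hM
  have key2 : ∀ t, 0 ≤ t → Z t * (2 * n * ∑ i, ‖Y t i‖ ^ 2) ≤ M := by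
    intro t ht
    rw [← sum_dist_sq (Y t) (hcm t ht), Finset.mul_sum]
    refine Finset.sum_le_sum fun i _ => ?_
    rw [Finset.mul_sum]
    refine Finset.sum_le_sum fun j _ => ?_
    by_cases hij : i = j
    · simp [hij]; positivity
    · have := key t ht i j hij
      nlinarith [Zpos t]
  have Mpos : 0 < M := by
    have : Nonempty (Fin n) := ⟨⟨0, hn0⟩⟩
    exact Finset.sum_pos (fun i _ => Finset.sum_pos (fun j _ => Real.exp_pos _) Finset.univ_nonempty)
      Finset.univ_nonempty
  refine ⟨1, 2 * M / n, one_pos, by positivity, fun t ht hSt => ?_⟩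
  rw [(hS t ht).derivWithin (uniqueDiffOn_Ici 0 t ht)]
  have hSpos : 0 < ∑ i, ‖Y t i‖ ^ 2 := by linarith
  have h1 : -4 * ∑ i, ∑ j, w t i j * ‖Y t i - Y t j‖ ^ 2 ≤ 4 * Z t := by
    have h2 : ∑ i, ∑ j, -(w t i j * ‖Y t i - Y t j‖ ^ 2)
        ≤ ∑ i, ∑ j, (P i j * Z t + (offd (b t) i j / Z t - P i j)) := by
      refine Finset.sum_le_sum fun i _ => Finset.sum_le_sum fun j _ => ?_
      by_cases hij : i = j
      · simp [hw, hP, offd, hij]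
      · have hbd : b t i j * ‖Y t i - Y t j‖ ^ 2 = 1 - b t i j := by
          simp only [hb]
          have : (1 + ‖Y t i - Y t j‖ ^ 2) ≠ 0 := by positivity
          field_simp
          ring
        have hp := hppos i j hij
        have hq : 0 ≤ b t i j / Z t := div_nonneg (bpos t i j).le (Zpos t).le
        simp only [hw, hP, offd, ne_eq, hij, not_false_eq_true, if_true]
        rw [mul_assoc, hbd]
        have e1 := mul_nonneg hq (bpos t i j).le
        have e2 := mul_le_mul_of_nonneg_left (bZ t i j hij) hp.le
        have e3 : -((p i j - b t i j / Z t) * (1 - b t i j))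
          = p i j * b t i j - b t i j / Z t * b t i j + (b t i j / Z t - p i j) := by ring
        rw [e3]
        linarith
    have h3 : ∑ i, ∑ j, (P i j * Z t + (offd (b t) i j / Z t - P i j)) = Z t := by
      simp_rw [Finset.sum_add_distrib, Finset.sum_sub_distrib, ← Finset.sum_mul, ← Finset.sum_div]
      rw [Psum]
      change 1 * Z t + (Z t / Z t - 1) = Z t
      rw [div_self (Zpos t).ne']; ring
    rw [h3] at h2
    simp_rw [Finset.sum_neg_distrib] at h2
    linarith
  refine h1.trans ?_
  rw [le_div_iff₀ hSpos, le_div_iff₀ hnR]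
  nlinarith [key2 t ht]
end
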